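/- arXiv:2501.00892 — 2 statements merged into one kernel-verified Lean document; each statement's English description precedes it below -/
import Mathlib

section
/- The Hausdorff dimension of the Sierpinski carpet equals log 8 / log 3. -/
/-!
The carpet has positive and finite Hausdorff measure in the exponent `d = log 8 / log 3`, for which
`3 ^ d = 8`; hence its dimension is `d`. It is parametrized by sequences over the eight digit pairs
other than `(1, 1)` (`Carpet.range_point`).

* Finiteness: the `8 ^ n` cells obtained by fixing the first `n` digit pairs cover the carpet and
  have diameter at most `2 * 3⁻ⁿ`, so the covering sums are at most `2 ^ d`.
* Positivity is the mass distribution principle. Push the uniform Bernoulli measure on digit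
  sequences forward to the plane. If a set has diameter at most `3⁻ⁿ`, the integers formed by the
  first `n` digits of a coordinate take at most five values on it, so it meets at most `25` cells,
  each of mass `8⁻ⁿ` (`Carpet.codeMeasure_preimage_le`). The mass of a set of diameter `r ≤ 1` is
  therefore at most `200 * r ^ d`, and the carpet, having mass `1`, has `d`-dimensional measure at
  least `1 / 200`.
-/

open MeasureTheory Metric Set
open scoped ENNReal

noncomputable section

/-- The Sierpinski carpet: points of `[0,1]²` admitting ternary expansions in which the digit
pair `(1,1)` never occurs. -/
def sierpinskiCarpet : Set (EuclideanSpace ℝ (Fin 2)) :=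
  { p | ∃ a b : ℕ → Fin 3, (∀ i, ¬(a i = 1 ∧ b i = 1)) ∧
      p 0 = ∑' i : ℕ, (a i : ℝ) / 3 ^ (i + 1) ∧
      p 1 = ∑' i : ℕ, (b i : ℝ) / 3 ^ (i + 1) }

namespace Carpet

/-! ### Coding by digit pairs, and the exponent -/

/-- The alphabet of the carpet: the eight digit pairs other than `(1, 1)`. -/
abbrev Digit : Type := {p : Fin 3 × Fin 3 // p ≠ (1, 1)}

instance : Nonempty Digit := ⟨⟨(0, 0), by decide⟩⟩

lemma card_digit : Fintype.card Digit = 8 := by decide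

/-- The point of the plane whose two coordinates have the ternary digits recorded by `x`. -/
def point (x : ℕ → Digit) : EuclideanSpace ℝ (Fin 2) :=
  !₂[Real.ofDigits fun i => (x i).1.1, Real.ofDigits fun i => (x i).1.2]

lemma ofDigits_three (a : ℕ → Fin 3) :
    Real.ofDigits a = ∑' i : ℕ, (a i : ℝ) / 3 ^ (i + 1) := by
  simp [Real.ofDigits, Real.ofDigitsTerm, div_eq_mul_inv]

lemma range_point : range point = sierpinskiCarpet := by
  ext p
  constructor
  · rintro ⟨x, rfl⟩
    refine ⟨fun i => (x i).1.1, fun i => (x i).1.2, fun i h => (x i).2 (Prod.ext h.1 h.2), ?_, ?_⟩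
    · simp [point, ofDigits_three]
    · simp [point, ofDigits_three]
  · rintro ⟨a, b, hab, h0, h1⟩
    refine ⟨fun i => ⟨(a i, b i), fun h => hab i ⟨congrArg Prod.fst h, congrArg Prod.snd h⟩⟩, ?_⟩
    ext i
    fin_cases i
    · simp [point, ofDigits_three, h0]
    · simp [point, ofDigits_three, h1]

lemma measurable_point : Measurable point := by
  have h : Measurable (Real.ofDigits : (ℕ → Fin 3) → ℝ) := Real.continuous_ofDigits.measurable
  refine (WithLp.measurable_toLp 2 (Fin 2 → ℝ)).comp (measurable_pi_iff.2 fun i => ?_)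
  fin_cases i
  · exact h.comp (by fun_prop)
  · exact h.comp (by fun_prop)

/-- The exponent `log 8 / log 3`. -/
def dim : ℝ := Real.log 8 / Real.log 3

lemma dim_pos : 0 < dim := div_pos (Real.log_pos (by norm_num)) (Real.log_pos (by norm_num))

lemma three_rpow_dim : (3 : ℝ) ^ dim = 8 := by
  have h : Real.log 3 ≠ 0 := (Real.log_pos (by norm_num)).ne'
  rw [Real.rpow_def_of_pos (by norm_num), dim, mul_div_cancel₀ _ h, Real.exp_log (by norm_num)]

lemma inv_three_pow_rpow_dim (n : ℕ) : ((3 : ℝ≥0∞)⁻¹ ^ n) ^ dim = 8⁻¹ ^ n := by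
  have h : (3 : ℝ≥0∞) ^ dim = 8 := by
    rw [← ENNReal.ofReal_ofNat 3, ENNReal.ofReal_rpow_of_pos (by norm_num), three_rpow_dim]
    simp
  rw [← ENNReal.rpow_natCast, ← ENNReal.rpow_mul, mul_comm, ENNReal.rpow_mul, ENNReal.inv_rpow, h,
    ENNReal.rpow_natCast]

/-! ### Upper bound: covering by cells -/

/-- The cell of level `n` with address `w`: the points whose first `n` digit pairs are `w`. -/
def cell (n : ℕ) (w : Fin n → Digit) : Set (EuclideanSpace ℝ (Fin 2)) :=
  point '' {x | ∀ i : Fin n, x i = w i}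

lemma ofReal_inv_three_pow (n : ℕ) : ENNReal.ofReal (((3 : ℝ) ^ n)⁻¹) = 3⁻¹ ^ n := by
  rw [ENNReal.ofReal_inv_of_pos (by positivity), ENNReal.ofReal_pow (by norm_num),
    ENNReal.inv_pow]
  simp

lemma ediam_cell_le (n : ℕ) (w : Fin n → Digit) : ediam (cell n w) ≤ 2 * 3⁻¹ ^ n := by
  refine ediam_le ?_
  rintro _ ⟨x, hx, rfl⟩ _ ⟨y, hy, rfl⟩
  have hxy : ∀ i < n, x i = y i := fun i hi => (hx ⟨i, hi⟩).trans (hy ⟨i, hi⟩).symm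
  have h0 := Real.abs_ofDigits_sub_ofDigits_le (x := fun i => (x i).1.1) (y := fun i => (y i).1.1)
    (n := n) fun i hi => by rw [hxy i hi]
  have h1 := Real.abs_ofDigits_sub_ofDigits_le (x := fun i => (x i).1.2) (y := fun i => (y i).1.2)
    (n := n) fun i hi => by rw [hxy i hi]
  push_cast at h0 h1
  have h2 : (2 : ℝ≥0∞) * 3⁻¹ ^ n = ENNReal.ofReal (2 * ((3 : ℝ) ^ n)⁻¹) := by
    rw [ENNReal.ofReal_mul (by norm_num), ofReal_inv_three_pow, ENNReal.ofReal_ofNat]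
  rw [h2, edist_dist]
  refine ENNReal.ofReal_le_ofReal ?_
  rw [EuclideanSpace.dist_eq, Fin.sum_univ_two]
  refine Real.sqrt_le_iff.2 ⟨by positivity, ?_⟩
  simp only [point, Real.dist_eq]
  have g0 := pow_le_pow_left₀ (abs_nonneg _) h0 2
  have g1 := pow_le_pow_left₀ (abs_nonneg _) h1 2
  simp only [Matrix.cons_val_zero, Matrix.cons_val_one]
  nlinarith [sq_nonneg (((3 : ℝ) ^ n)⁻¹)]

lemma hausdorffMeasure_carpet_ne_top : μH[dim] sierpinskiCarpet ≠ ∞ := by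
  have hr : Filter.Tendsto (fun n : ℕ => 2 * (3 : ℝ≥0∞)⁻¹ ^ n) Filter.atTop (nhds 0) := by
    have := ENNReal.Tendsto.const_mul (a := 2)
      (ENNReal.tendsto_pow_atTop_nhds_zero_of_lt_one (r := 3⁻¹)
        (ENNReal.inv_lt_one.2 (by norm_num))) (.inr (by norm_num))
    simpa using this
  have key := Measure.hausdorffMeasure_le_liminf_sum (ι := fun n : ℕ => Fin n → Digit) dim
    sierpinskiCarpet (l := Filter.atTop) _ hr cell (.of_forall ediam_cell_le)
    (.of_forall fun n => by
      rw [← range_point]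
      rintro _ ⟨x, rfl⟩
      exact mem_iUnion.2 ⟨fun i => x i, x, fun _ => rfl, rfl⟩)
  have hsum : ∀ n : ℕ, ∑ w, ediam (cell n w) ^ dim ≤ (2 : ℝ≥0∞) ^ dim := fun n => by
    calc ∑ w, ediam (cell n w) ^ dim
        ≤ ∑ _w : Fin n → Digit, (2 : ℝ≥0∞) ^ dim * 8⁻¹ ^ n := by
          refine Finset.sum_le_sum fun w _ => ?_
          rw [← inv_three_pow_rpow_dim, ← ENNReal.mul_rpow_of_nonneg _ _ dim_pos.le]
          exact ENNReal.rpow_le_rpow (ediam_cell_le n w) dim_pos.le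
      _ = (2 : ℝ≥0∞) ^ dim * (8 ^ n * 8⁻¹ ^ n) := by
          rw [Finset.sum_const, Finset.card_univ, Fintype.card_fun, card_digit, Fintype.card_fin,
            nsmul_eq_mul]
          push_cast
          ring
      _ = (2 : ℝ≥0∞) ^ dim := by
          rw [← mul_pow, ENNReal.mul_inv_cancel (by norm_num) (by norm_num), one_pow, mul_one]
  refine ne_top_of_le_ne_top (b := (2 : ℝ≥0∞) ^ dim)
    (ENNReal.rpow_ne_top_of_nonneg dim_pos.le (by norm_num)) (key.trans ?_)
  exact (Filter.liminf_le_liminf (.of_forall hsum)).trans (by simp)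

/-! ### Lower bound: the natural measure -/

/-- The integer with ternary digits `a 0, …, a (n - 1)`, most significant first; thus
`truncNat a n / 3 ^ n` is the `n`-th truncation of `0.a₀a₁a₂…`. -/
def truncNat (a : ℕ → Fin 3) : ℕ → ℕ
  | 0 => 0
  | n + 1 => 3 * truncNat a n + a n

lemma eq_of_truncNat_eq {a b : ℕ → Fin 3} {n : ℕ} (h : truncNat a n = truncNat b n) :
    ∀ i < n, a i = b i := by
  induction n with
  | zero => simp
  | succ n ih =>
    simp only [truncNat] at h
    have ha := (a n).2
    have hb := (b n).2
    intro i hi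
    rcases Nat.lt_succ_iff_lt_or_eq.1 hi with hi | rfl
    · exact ih (by omega) i hi
    · exact Fin.ext (by omega)

lemma sum_ofDigitsTerm (a : ℕ → Fin 3) (n : ℕ) :
    3 ^ n * ∑ i ∈ Finset.range n, Real.ofDigitsTerm a i = truncNat a n := by
  induction n with
  | zero => simp [truncNat]
  | succ n ih =>
    rw [Finset.sum_range_succ, mul_add, pow_succ', mul_assoc, ih, ← pow_succ', Real.ofDigitsTerm]
    push_cast [truncNat]
    field_simp

lemma pow_mul_ofDigits_mem (a : ℕ → Fin 3) (n : ℕ) :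
    3 ^ n * Real.ofDigits a ∈ Icc (truncNat a n : ℝ) (truncNat a n + 1) := by
  have h : 3 ^ n * Real.ofDigits a = truncNat a n + Real.ofDigits fun i => a (i + n) := by
    rw [Real.ofDigits_eq_sum_add_ofDigits a n, mul_add, sum_ofDigitsTerm]
    push_cast
    rw [mul_inv_cancel_left₀ (by positivity)]
  rw [h]
  constructor
  · linarith [Real.ofDigits_nonneg fun i => a (i + n)]
  · linarith [Real.ofDigits_le_one fun i => a (i + n)]

/-- Reals at distance at most `3⁻ⁿ` have `n`-digit truncations differing by at most `2`. -/
lemma truncNat_mem {a b : ℕ → Fin 3} {n : ℕ}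
    (h : |Real.ofDigits a - Real.ofDigits b| ≤ ((3 : ℝ) ^ n)⁻¹) :
    truncNat a n ∈ Finset.Icc (truncNat b n - 2) (truncNat b n + 2) := by
  obtain ⟨ha, ha'⟩ := pow_mul_ofDigits_mem a n
  obtain ⟨hb, hb'⟩ := pow_mul_ofDigits_mem b n
  have h3 : (0 : ℝ) < 3 ^ n := by positivity
  have h' : |3 ^ n * Real.ofDigits a - 3 ^ n * Real.ofDigits b| ≤ 1 := by
    rw [← mul_sub, abs_mul, abs_of_pos h3]
    calc (3 : ℝ) ^ n * |Real.ofDigits a - Real.ofDigits b| ≤ 3 ^ n * ((3 : ℝ) ^ n)⁻¹ := by gcongr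
      _ = 1 := mul_inv_cancel₀ h3.ne'
  obtain ⟨h1, h2⟩ := abs_le.1 h'
  have e1 : (truncNat a n : ℝ) ≤ (truncNat b n + 2 : ℕ) := by push_cast; linarith
  have e2 : (truncNat b n : ℝ) ≤ (truncNat a n + 2 : ℕ) := by push_cast; linarith
  have e1 := Nat.cast_le.1 e1
  have e2 := Nat.cast_le.1 e2
  rw [Finset.mem_Icc]
  omega

/-- The uniform Bernoulli measure on digit sequences. -/
def codeMeasure : Measure (ℕ → Digit) :=
  Measure.infinitePi fun _ => (PMF.uniformOfFintype Digit).toMeasure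

instance : IsProbabilityMeasure codeMeasure := by unfold codeMeasure; infer_instance

lemma codeMeasure_cylinder (n : ℕ) (y : ℕ → Digit) :
    codeMeasure {x | ∀ i < n, x i = y i} = 8⁻¹ ^ n := by
  have h : {x : ℕ → Digit | ∀ i < n, x i = y i} =
      Set.pi (Finset.range n) fun i => {y i} := by
    ext x
    simp
  rw [h, codeMeasure, Measure.infinitePi_pi _ fun i _ => measurableSet_singleton _]
  have h1 : ∀ d : Digit, (PMF.uniformOfFintype Digit).toMeasure {d} = 8⁻¹ := fun d => by
    rw [PMF.toMeasure_apply_singleton _ _ (measurableSet_singleton _),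
      PMF.uniformOfFintype_apply, card_digit]
    simp
  simp [h1]

/-- Sequences with prescribed truncations in both coordinates form an empty set or a cylinder. -/
lemma codeMeasure_trunc_le (n : ℕ) (u v : ℕ) :
    codeMeasure {x | truncNat (fun i => (x i).1.1) n = u ∧
      truncNat (fun i => (x i).1.2) n = v} ≤ 8⁻¹ ^ n := by
  rcases Set.eq_empty_or_nonempty {x : ℕ → Digit | truncNat (fun i => (x i).1.1) n = u ∧
      truncNat (fun i => (x i).1.2) n = v} with h | ⟨y, hy1, hy2⟩
  · rw [h]
    simp
  · rw [← codeMeasure_cylinder n y]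
    refine measure_mono fun x hx i hi => ?_
    exact Subtype.ext (Prod.ext (eq_of_truncNat_eq (hx.1.trans hy1.symm) i hi)
      (eq_of_truncNat_eq (hx.2.trans hy2.symm) i hi))

/-- A set of diameter at most `3⁻ⁿ` meets at most `25` of the cells of level `n`, each of mass
`8⁻ⁿ`. -/
lemma codeMeasure_preimage_le {s : Set (EuclideanSpace ℝ (Fin 2))} {n : ℕ}
    (hs : ediam s ≤ 3⁻¹ ^ n) : codeMeasure (point ⁻¹' s) ≤ 25 * 8⁻¹ ^ n := by
  rcases Set.eq_empty_or_nonempty (point ⁻¹' s) with h | ⟨y, hy⟩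
  · rw [h]
    simp
  set A := Finset.Icc (truncNat (fun i => (y i).1.1) n - 2) (truncNat (fun i => (y i).1.1) n + 2)
    with hA
  set B := Finset.Icc (truncNat (fun i => (y i).1.2) n - 2) (truncNat (fun i => (y i).1.2) n + 2)
    with hB
  have hcard : (A ×ˢ B).card ≤ 25 := by
    rw [Finset.card_product, hA, hB, Nat.card_Icc, Nat.card_Icc]
    refine (Nat.mul_le_mul (?_ : _ ≤ 5) (?_ : _ ≤ 5)).trans (by norm_num) <;> omega
  have hsub : point ⁻¹' s ⊆ ⋃ q ∈ A ×ˢ B, {x | truncNat (fun i => (x i).1.1) n = q.1 ∧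
      truncNat (fun i => (x i).1.2) n = q.2} := by
    intro x hx
    have hd : dist (point x) (point y) ≤ ((3 : ℝ) ^ n)⁻¹ := by
      have := edist_le_of_ediam_le (mem_preimage.1 hx) (mem_preimage.1 hy) hs
      rw [← ofReal_inv_three_pow, edist_dist] at this
      exact (ENNReal.ofReal_le_ofReal_iff (by positivity)).1 this
    have hc : ∀ j, |point x j - point y j| ≤ ((3 : ℝ) ^ n)⁻¹ := fun j => by
      refine le_trans ?_ hd
      rw [dist_eq_norm]
      exact PiLp.norm_apply_le (point x - point y) j
    have h0 := truncNat_mem (by simpa [point] using hc 0)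
    have h1 := truncNat_mem (by simpa [point] using hc 1)
    exact mem_biUnion (Finset.mem_coe.2 (Finset.mk_mem_product h0 h1)) ⟨rfl, rfl⟩
  calc codeMeasure (point ⁻¹' s)
      ≤ ∑ q ∈ A ×ˢ B, codeMeasure {x | truncNat (fun i => (x i).1.1) n = q.1 ∧
          truncNat (fun i => (x i).1.2) n = q.2} :=
        (measure_mono hsub).trans (measure_biUnion_finset_le _ _)
    _ ≤ ∑ _q ∈ A ×ˢ B, 8⁻¹ ^ n := Finset.sum_le_sum fun q _ => codeMeasure_trunc_le n q.1 q.2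
    _ = (A ×ˢ B).card * 8⁻¹ ^ n := by rw [Finset.sum_const, nsmul_eq_mul]
    _ ≤ 25 * 8⁻¹ ^ n := by
        gcongr
        exact_mod_cast hcard

/-- The Frostman condition for the natural measure; the constant is `200 = 25 * 8`, the factor `8`
coming from rounding the diameter up to a power of `1 / 3`. -/
lemma codeMeasure_preimage_le_rpow {s : Set (EuclideanSpace ℝ (Fin 2))} (hs : ediam s ≤ 1) :
    codeMeasure (point ⁻¹' s) ≤ 200 * ediam s ^ dim := by
  rcases eq_or_ne (ediam s) 0 with h | h
  · have hlim : Filter.Tendsto (fun n : ℕ => 25 * (8 : ℝ≥0∞)⁻¹ ^ n) Filter.atTop (nhds 0) := by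
      have := ENNReal.Tendsto.const_mul (a := 25)
        (ENNReal.tendsto_pow_atTop_nhds_zero_of_lt_one (r := 8⁻¹)
          (ENNReal.inv_lt_one.2 (by norm_num))) (.inr (by norm_num))
      simpa using this
    exact (ge_of_tendsto' hlim fun n => codeMeasure_preimage_le (by simp [h])).trans zero_le
  · have ht : ediam s ≠ ∞ := ne_top_of_le_ne_top ENNReal.one_ne_top hs
    obtain ⟨n, hn1, hn2⟩ := exists_nat_pow_near_of_lt_one (x := (ediam s).toReal)
      (y := (3 : ℝ)⁻¹) (ENNReal.toReal_pos h ht)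
      (by simpa using ENNReal.toReal_mono ENNReal.one_ne_top hs) (by norm_num) (by norm_num)
    rw [inv_pow] at hn1 hn2
    have h1 : 3⁻¹ ^ (n + 1) ≤ ediam s := by
      rw [← ofReal_inv_three_pow]
      exact ENNReal.ofReal_le_of_le_toReal hn1.le
    have h2 : ediam s ≤ 3⁻¹ ^ n := by
      rw [← ofReal_inv_three_pow]
      exact (ENNReal.le_ofReal_iff_toReal_le ht (by positivity)).2 hn2
    calc codeMeasure (point ⁻¹' s) ≤ 25 * 8⁻¹ ^ n := codeMeasure_preimage_le h2
      _ = 25 * (8 * 8⁻¹) * 8⁻¹ ^ n := by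
          rw [ENNReal.mul_inv_cancel (by norm_num) (by norm_num), mul_one]
      _ = 200 * 8⁻¹ ^ (n + 1) := by ring
      _ = 200 * (3⁻¹ ^ (n + 1)) ^ dim := by rw [inv_three_pow_rpow_dim]
      _ ≤ 200 * ediam s ^ dim := by
          gcongr
          exact dim_pos.le

lemma hausdorffMeasure_carpet_ne_zero : μH[dim] sierpinskiCarpet ≠ 0 := by
  set μ : Measure (EuclideanSpace ℝ (Fin 2)) := (200 : ℝ≥0∞)⁻¹ • codeMeasure.map point with hμ
  have hle : μ ≤ μH[dim] := by
    refine Measure.le_hausdorffMeasure dim μ 1 one_pos fun s hs => ?_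
    -- Passing to the closure makes the set measurable and keeps its diameter.
    rw [← ediam_closure s] at hs ⊢
    refine (measure_mono subset_closure).trans ?_
    rw [hμ, Measure.smul_apply, smul_eq_mul,
      Measure.map_apply measurable_point isClosed_closure.measurableSet]
    rw [← ENNReal.div_eq_inv_mul]
    exact ENNReal.div_le_of_le_mul' (codeMeasure_preimage_le_rpow hs)
  have hpos : 0 < μ sierpinskiCarpet := by
    have h1 : 1 ≤ codeMeasure.map point sierpinskiCarpet := by
      refine le_trans ?_ (Measure.le_map_apply measurable_point.aemeasurable _)
      rw [← range_point, preimage_range, measure_univ]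
    rw [hμ, Measure.smul_apply, smul_eq_mul]
    exact ENNReal.mul_pos (by simp) (zero_lt_one.trans_le h1).ne'
  exact (hpos.trans_le (hle _)).ne'

end Carpet

/-- **The Hausdorff dimension of the Sierpinski carpet equals `log 8 / log 3`.** -/
theorem sierpinskiCarpet_dimH :
    dimH sierpinskiCarpet = ENNReal.ofReal (Real.log 8 / Real.log 3) := by
  have hd : ((Real.log 8 / Real.log 3).toNNReal : ℝ) = Carpet.dim :=
    Real.coe_toNNReal _ Carpet.dim_pos.le
  refine dimH_of_hausdorffMeasure_ne_zero_ne_top ?_ ?_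
  · rw [hd]
    exact Carpet.hausdorffMeasure_carpet_ne_zero
  · rw [hd]
    exact Carpet.hausdorffMeasure_carpet_ne_top

end
end

section
/- Let S be the Sierpinski carpet and, for k ∈ ℕ, let 𝒯_k be its canonical level-k partition into the 8^k tiles S ∩ Q over admissible grid squares Q of side 3^{-k}. Then there exists an absolute constant c₀ > 0 (independent of k) such that every tile t ∈ 𝒯_k contains a point x_t with S ∩ B(x_t, c₀·3^{-k}) ⊆ t and t ⊆ B(x_t, √2·3^{-k}); in particular the tiles satisfy the Uniform Geometric Regularity condition with radii r_min = c₀·3^{-k} and r_max = √2·3^{-k}, whose ratio r_max/r_min is bounded independently of k. -/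
/-! The template point of the unit carpet is `(1/2, 1/3)`: its coordinates are `0.111…` and
`0.0222…` in base `3`, so it lies in the carpet, and it is at distance `1/3 > 1/4` from the
sides of the unit square. If the interior of a grid square `Q` of side `3^{-k}` with indices
`i, j` meets the carpet at `p`, then the first `k` digits of `p` are those of `i` and `j`
(`prefix_eq`). Keeping these digits and continuing with those of the template point gives
the point `((i + 1/2) / 3^k, (j + 1/3) / 3^k)` of the carpet (`tsum_splice`). A ball of radius
`1/4 · 3^{-k}` around it stays inside `Q`, and the diameter of `Q` is `√2 · 3^{-k}`, so `c₀ = 1/4`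
works. -/

open MeasureTheory Metric Set
open scoped ENNReal

noncomputable section

/-- The closed grid square `[i/3^k, (i+1)/3^k] × [j/3^k, (j+1)/3^k]`. -/
def gridSquare (k i j : ℕ) : Set (EuclideanSpace ℝ (Fin 2)) :=
  { p | p 0 ∈ Icc ((i : ℝ) / 3 ^ k) (((i : ℝ) + 1) / 3 ^ k) ∧
        p 1 ∈ Icc ((j : ℝ) / 3 ^ k) (((j : ℝ) + 1) / 3 ^ k) }

/-- The canonical level-`k` partition of the Sierpinski carpet: the sets `S ∩ Q` over grid
squares `Q` of side `3^{-k}` whose interior meets `S`. -/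
def carpetPartition (k : ℕ) : Set (Set (EuclideanSpace ℝ (Fin 2))) :=
  { t | ∃ i j : ℕ, i < 3 ^ k ∧ j < 3 ^ k ∧
      (interior (gridSquare k i j) ∩ sierpinskiCarpet).Nonempty ∧
      t = sierpinskiCarpet ∩ gridSquare k i j }

lemma summable_digits (a : ℕ → Fin 3) :
    Summable fun n : ℕ => (a n : ℝ) / 3 ^ (n + 1) := by
  have h : Summable fun n : ℕ => ((1 : ℝ) / 3) ^ n :=
    summable_geometric_of_lt_one (by norm_num) (by norm_num)
  refine Summable.of_nonneg_of_le (fun n => by positivity) (fun n => ?_) h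
  have ha : (a n : ℝ) ≤ 3 := by
    have := (a n).isLt
    exact_mod_cast this.le
  rw [div_pow, one_pow, div_le_div_iff₀ (by positivity) (by positivity), pow_succ]
  nlinarith [pow_pos (by norm_num : (0 : ℝ) < 3) n]

lemma tsum_third : ∑' n : ℕ, (1 : ℝ) / 3 ^ (n + 1) = 1 / 2 := by
  have h : ∀ n : ℕ, (1 : ℝ) / 3 ^ (n + 1) = (1 / 3) * (1 / 3) ^ n := by
    intro n
    rw [div_pow, one_pow, pow_succ]
    field_simp
  simp_rw [h]
  rw [tsum_mul_left, tsum_geometric_of_lt_one (by norm_num) (by norm_num)]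
  norm_num

lemma summable_third : Summable fun n : ℕ => (1 : ℝ) / 3 ^ (n + 1) := by
  simpa using summable_digits fun _ => 1

lemma tsum_digits_nonneg (a : ℕ → Fin 3) : 0 ≤ ∑' n : ℕ, (a n : ℝ) / 3 ^ (n + 1) :=
  tsum_nonneg fun n => by positivity

lemma tsum_digits_le_one (a : ℕ → Fin 3) : ∑' n : ℕ, (a n : ℝ) / 3 ^ (n + 1) ≤ 1 := by
  have h2 : ∑' n : ℕ, 2 * ((1 : ℝ) / 3 ^ (n + 1)) = 1 := by
    rw [tsum_mul_left, tsum_third]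
    norm_num
  rw [← h2]
  refine (summable_digits a).tsum_le_tsum (fun n => ?_) (summable_third.mul_left 2)
  have ha : (a n : ℝ) ≤ 2 := by
    have := (a n).isLt
    exact_mod_cast Nat.le_of_lt_succ this
  rw [mul_one_div]
  gcongr

/-- The digit sequence given by the first `k` digits of `a` followed by the digits of `c`. -/
def splice (k : ℕ) (a c : ℕ → Fin 3) (n : ℕ) : Fin 3 :=
  if n < k then a n else c (n - k)

/-- The integer whose base-`3` digits, most significant first, are the first `k` digits
of `a`. -/
def digitPrefix (a : ℕ → Fin 3) : ℕ → ℕ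
  | 0 => 0
  | k + 1 => 3 * digitPrefix a k + (a k : ℕ)

lemma sum_range_digits (a : ℕ → Fin 3) (k : ℕ) :
    ∑ n ∈ Finset.range k, (a n : ℝ) / 3 ^ (n + 1) = (digitPrefix a k : ℝ) / 3 ^ k := by
  induction k with
  | zero => simp [digitPrefix]
  | succ k ih =>
    rw [Finset.sum_range_succ, ih, digitPrefix]
    push_cast
    rw [pow_succ]
    field_simp

lemma tsum_splice (k : ℕ) (a c : ℕ → Fin 3) :
    ∑' n : ℕ, (splice k a c n : ℝ) / 3 ^ (n + 1) =
      (digitPrefix a k + ∑' n : ℕ, (c n : ℝ) / 3 ^ (n + 1)) / 3 ^ k := by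
  rw [← (summable_digits (splice k a c)).sum_add_tsum_nat_add k, add_div,
    ← sum_range_digits, ← tsum_div_const]
  congr 1
  · refine Finset.sum_congr rfl fun n hn => ?_
    simp [splice, Finset.mem_range.mp hn]
  · refine tsum_congr fun n => ?_
    have h : splice k a c (n + k) = c n := by simp [splice]
    rw [h, div_div, ← pow_add]
    congr 2
    ring

lemma splice_self (k : ℕ) (a : ℕ → Fin 3) : splice k a (fun n => a (n + k)) = a := by
  funext n
  unfold splice
  split_ifs with h
  · rfl
  · simp [Nat.sub_add_cancel (not_lt.mp h)]

/-- Strictness of both inequalities matters: an endpoint has two ternary expansions, one of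
which has a neighbouring prefix. -/
lemma prefix_eq {a : ℕ → Fin 3} {k i : ℕ}
    (h : ∑' n : ℕ, (a n : ℝ) / 3 ^ (n + 1) ∈ Ioo ((i : ℝ) / 3 ^ k) (((i : ℝ) + 1) / 3 ^ k)) :
    digitPrefix a k = i := by
  rw [← splice_self k a, tsum_splice] at h
  have h3 : (0 : ℝ) < 3 ^ k := by positivity
  have h1 := (div_lt_div_iff_of_pos_right h3).mp h.1
  have h2 := (div_lt_div_iff_of_pos_right h3).mp h.2
  have hn := tsum_digits_nonneg fun n => a (n + k)
  have hl := tsum_digits_le_one fun n => a (n + k)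
  have u1 : (i : ℝ) < digitPrefix a k + 1 := by linarith
  have u2 : (digitPrefix a k : ℝ) < i + 1 := by linarith
  have v1 : i < digitPrefix a k + 1 := by exact_mod_cast u1
  have v2 : digitPrefix a k < i + 1 := by exact_mod_cast u2
  omega

lemma interior_gridSquare {k i j : ℕ} {p : EuclideanSpace ℝ (Fin 2)}
    (hp : p ∈ interior (gridSquare k i j)) :
    p 0 ∈ Ioo ((i : ℝ) / 3 ^ k) (((i : ℝ) + 1) / 3 ^ k) ∧
      p 1 ∈ Ioo ((j : ℝ) / 3 ^ k) (((j : ℝ) + 1) / 3 ^ k) := by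
  -- Coordinate projections are open, so they send interior points to interior points.
  have hopen : ∀ m : Fin 2, IsOpenMap fun q : EuclideanSpace ℝ (Fin 2) => q m := fun m =>
    (isOpenMap_eval m).comp (PiLp.homeomorph 2 fun _ : Fin 2 => ℝ).isOpenMap
  constructor
  · rw [← interior_Icc]
    exact interior_mono (image_subset_iff.mpr fun q hq => hq.1)
      ((hopen 0).image_interior_subset _ (mem_image_of_mem _ hp))
  · rw [← interior_Icc]
    exact interior_mono (image_subset_iff.mpr fun q hq => hq.2)
      ((hopen 1).image_interior_subset _ (mem_image_of_mem _ hp))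

/-- The digits of `1/3 = 0.0222…`. -/
def thirdDigits (n : ℕ) : Fin 3 := if n = 0 then 0 else 2

lemma tsum_thirdDigits : ∑' n : ℕ, (thirdDigits n : ℝ) / 3 ^ (n + 1) = 1 / 3 := by
  rw [(summable_digits thirdDigits).tsum_eq_zero_add]
  have h : ∀ n : ℕ, (thirdDigits (n + 1) : ℝ) / 3 ^ (n + 1 + 1) = 2 / 3 * (1 / 3 ^ (n + 1)) := by
    intro n
    simp only [thirdDigits, Nat.add_eq_zero_iff, one_ne_zero, and_false, if_false]
    rw [pow_succ _ (n + 1)]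
    simp
    field_simp
  simp_rw [h]
  rw [tsum_mul_left, tsum_third]
  norm_num [thirdDigits]

/-- **Uniform Geometric Regularity of the canonical carpet partitions.** There is an absolute
constant `c₀ > 0`, independent of `k`, such that every tile `t` of the level-`k` partition contains
a point `x_t` with `S ∩ B(x_t, c₀ · 3^{-k}) ⊆ t ⊆ B(x_t, √2 · 3^{-k})`; in particular the ratio
`r_max / r_min = √2 / c₀` is bounded independently of `k`. -/
theorem carpetPartition_uniform_regularity :
    ∃ c₀ : ℝ, 0 < c₀ ∧ c₀ ≤ Real.sqrt 2 ∧
      ∀ k : ℕ, ∀ t ∈ carpetPartition k, ∃ x ∈ t,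
        sierpinskiCarpet ∩ closedBall x (c₀ / 3 ^ k) ⊆ t ∧
        t ⊆ closedBall x (Real.sqrt 2 / 3 ^ k) := by
  refine ⟨1 / 4, by norm_num, Real.le_sqrt_of_sq_le (by norm_num), ?_⟩
  rintro k t ⟨i, j, -, -, ⟨p, hpQ, a, b, hab, hp0, hp1⟩, rfl⟩
  obtain ⟨h0, h1⟩ := interior_gridSquare hpQ
  have hi : digitPrefix a k = i := prefix_eq (hp0 ▸ h0)
  have hj : digitPrefix b k = j := prefix_eq (hp1 ▸ h1)
  set r : ℝ := 1 / 3 ^ k with hr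
  have hrpos : 0 < r := by positivity
  have hdiv : ∀ y : ℝ, y / 3 ^ k = y * r := fun y => by rw [hr, mul_one_div]
  have hx0 : ∑' n : ℕ, (splice k a (fun _ => 1) n : ℝ) / 3 ^ (n + 1) = (i + 1 / 2) * r := by
    rw [tsum_splice, hi, hdiv, ← tsum_third]
    simp
  have hx1 : ∑' n : ℕ, (splice k b thirdDigits n : ℝ) / 3 ^ (n + 1) = (j + 1 / 3) * r := by
    rw [tsum_splice, hj, hdiv, tsum_thirdDigits]
  refine ⟨!₂[(i + 1 / 2) * r, (j + 1 / 3) * r], ⟨⟨splice k a (fun _ => 1),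
    splice k b thirdDigits, ?_, by simpa using hx0.symm, by simpa using hx1.symm⟩, ?_⟩, ?_, ?_⟩
  · intro n
    unfold splice
    split_ifs with h
    · exact hab n
    · unfold thirdDigits
      split_ifs <;> simp
  · simp only [gridSquare, mem_ofPred_eq, hdiv, mem_Icc, Matrix.cons_val_zero, Matrix.cons_val_one]
    refine ⟨⟨?_, ?_⟩, ?_, ?_⟩ <;> nlinarith
  · rintro q ⟨hqS, hq⟩
    refine ⟨hqS, ?_⟩
    rw [mem_closedBall, dist_eq_norm, hdiv] at hq
    have c0 := (PiLp.norm_apply_le _ (0 : Fin 2)).trans hq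
    have c1 := (PiLp.norm_apply_le _ (1 : Fin 2)).trans hq
    simp only [PiLp.sub_apply, Real.norm_eq_abs, abs_le, Matrix.cons_val_zero,
      Matrix.cons_val_one] at c0 c1
    simp only [gridSquare, mem_ofPred_eq, hdiv, mem_Icc]
    refine ⟨⟨?_, ?_⟩, ?_, ?_⟩ <;> nlinarith
  · rintro q ⟨-, hq⟩
    simp only [gridSquare, mem_ofPred_eq, hdiv, mem_Icc] at hq
    obtain ⟨⟨q1, q2⟩, q3, q4⟩ := hq
    rw [mem_closedBall, EuclideanSpace.dist_eq, hdiv]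
    refine Real.sqrt_le_iff.mpr ⟨by positivity, ?_⟩
    rw [mul_pow, Real.sq_sqrt (by norm_num), Fin.sum_univ_two]
    simp only [Real.dist_eq, sq_abs, Matrix.cons_val_zero, Matrix.cons_val_one]
    have e0 : (q 0 - (i + 1 / 2) * r) ^ 2 ≤ r ^ 2 :=
      sq_le_sq' (by nlinarith) (by nlinarith)
    have e1 : (q 1 - (j + 1 / 3) * r) ^ 2 ≤ r ^ 2 :=
      sq_le_sq' (by nlinarith) (by nlinarith)
    linarith

end
end
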